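/- If there exists a (k, n) strategy for the GKS game and there exists a (k', n') strategy for the GKS game, then there exists a (k·k', n·n') strategy for the GKS game. -/

import Mathlib

/-- The string produced in the GKS game on `n` variables when Eve reveals the
indices in the order `π 0, π 1, …, π (n-1)`, Alice plays according to
strategy `a` (which, given the nonempty list of indices revealed so far,
outputs the bit placed at the most recently revealed index) at the first
`n - 1` revealed indices, and Eve places the bit `b` at the last revealed
index `π (n-1)`. -/
def gksString (n : ℕ) (a : List (Fin n) → Bool) (π : Equiv.Perm (Fin n))
    (b : Bool) : Fin n → Bool :=
  fun j =>
    if ((π.symm j : Fin n) : ℕ) = n - 1 then b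
    else a (((List.finRange n).take (((π.symm j : Fin n) : ℕ) + 1)).map (⇑π))

/-- `(a, B)` is a `(k, n)` strategy for the GKS game: for every order `π` in
which Eve reveals the indices and every bit `b` placed by Eve at the last
revealed index `π (n-1)`, the resulting string `x` satisfies
`π (n-1) ∈ B x` and `(B x).card ≤ k`. -/
def IsGKSStrategy (k n : ℕ) (a : List (Fin n) → Bool)
    (B : (Fin n → Bool) → Finset (Fin n)) : Prop :=
  ∀ (π : Equiv.Perm (Fin n)) (b : Bool),
    (∀ i : Fin n, (i : ℕ) = n - 1 → π i ∈ B (gksString n a π b)) ∧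
    (B (gksString n a π b)).card ≤ k

/-- There exists a `(k, n)` strategy for the GKS game. -/
def HasGKSStrategy (k n : ℕ) : Prop :=
  ∃ (a : List (Fin n) → Bool) (B : (Fin n → Bool) → Finset (Fin n)),
    IsGKSStrategy k n a B

/-- The cost `C(n)` of the GKS game on `n` variables: the least `k` for which
a `(k, n)` strategy exists. -/
noncomputable def gksCost (n : ℕ) : ℕ :=
  sInf {k : ℕ | HasGKSStrategy k n}

theorem gks_take {γ : Type} (p : List γ) (j : γ) (s : List γ) :
    (p ++ j :: s).take (p.length + 1) = p ++ [j] := by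
  induction p with
  | nil => simp
  | cons c p ih => simpa using ih

/-- Relational list version of a play. -/
def GKSPlay {γ : Type} (a : List γ → Bool) (l : List γ) (x : γ → Bool) : Prop :=
  ∀ p j s, l = p ++ j :: s → s ≠ [] → x j = a (p ++ [j])

/-- Relational version of the existence of a strategy, over any type. -/
def GKSRel (k : ℕ) (γ : Type) : Prop :=
  ∃ (a : List γ → Bool) (B : (γ → Bool) → Finset γ),
    ∀ l : List γ, l.Nodup → (∀ g, g ∈ l) → ∀ x, GKSPlay a l x →
      (∀ p j, l = p ++ [j] → j ∈ B x) ∧ (B x).card ≤ k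

theorem gksRel_of_has {k n : ℕ} (h : HasGKSStrategy k n) : GKSRel k (Fin n) := by
  obtain ⟨a, B, hB⟩ := h
  refine ⟨a, B, fun l hl hc x hx => ?_⟩
  have hlen : l.length = n := by
    have h1 : l.toFinset = Finset.univ := by ext g; simp [hc]
    rw [← List.toFinset_card_of_nodup hl, h1]; simp
  let f : Fin n → Fin n := fun i => l[(i : ℕ)]'(by omega)
  have hf : Function.Injective f := by
    intro i j hij
    have := (hl.getElem_inj_iff).1 hij
    exact Fin.ext this
  let π : Equiv.Perm (Fin n) := Equiv.ofBijective f (Finite.injective_iff_bijective.1 hf)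
  have hπ : ∀ i : Fin n, π i = l[(i : ℕ)]'(by omega) := fun i => rfl
  have hmap : (List.finRange n).map π = l := by
    apply List.ext_getElem
    · simp [hlen]
    · intro i h1 h2
      simp [hπ]
  by_cases hn : n = 0
  · subst hn
    have h0 := hB π true
    have hx0 : x = gksString 0 a π true := funext fun j => j.elim0
    rw [hx0]
    exact ⟨fun p j => j.elim0, h0.2⟩
  have hx0 : gksString n a π (x (π ⟨n - 1, by omega⟩)) = x := by
    funext j
    obtain ⟨i, rfl⟩ := π.surjective j
    unfold gksString
    simp only [Equiv.symm_apply_apply]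
    split_ifs with hi
    · congr 2; exact Fin.ext hi.symm
    · rw [List.map_take, hmap]
      have hi2 := i.2
      have hsplit : l = l.take i ++ π i :: l.drop (i + 1) := by
        rw [hπ, List.getElem_cons_drop, List.take_append_drop]
      rw [hx _ _ _ hsplit (by
        intro h0
        have := congrArg List.length h0
        simp at this
        omega)]
      rw [hπ, List.take_append_getElem]
  have h0 := hB π (x (π ⟨n - 1, by omega⟩))
  rw [hx0] at h0
  refine ⟨fun p j hp => ?_, h0.2⟩
  have := h0.1 ⟨n - 1, by omega⟩ rfl
  rw [hπ] at this
  have hpl : p.length = n - 1 := by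
    have := congrArg List.length hp
    simp at this; omega
  subst hp
  simpa [← hpl] using this

theorem has_of_gksRel {k n : ℕ} (h : GKSRel k (Fin n)) : HasGKSStrategy k n := by
  obtain ⟨a, B, hB⟩ := h
  refine ⟨a, B, fun π b => ?_⟩
  have key : ∀ p j s, (List.finRange n).map π = p ++ j :: s →
      ((π.symm j : Fin n) : ℕ) = p.length ∧ n = p.length + s.length + 1 := by
    intro p j s hp
    have hlen : n = p.length + s.length + 1 := by
      have := congrArg List.length hp
      simp at this; omega
    refine ⟨?_, hlen⟩
    have h1 : ((List.finRange n).map π)[p.length]'(by simp; omega) = j := by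
      simp [hp]
    simp at h1
    rw [← h1]; simp
  have h0 := hB ((List.finRange n).map π) ((List.nodup_finRange n).map π.injective)
    (fun g => by simpa using ⟨π.symm g, by simp⟩) (gksString n a π b) (by
      intro p j s hp hs
      obtain ⟨h1, h2⟩ := key p j s hp
      have : s.length ≠ 0 := by simpa using hs
      unfold gksString
      rw [if_neg (by omega), List.map_take, hp, h1, gks_take])
  refine ⟨fun i hi => ?_, h0.2⟩
  refine h0.1 ((List.finRange n).map π).dropLast _ ?_
  have hne : (List.finRange n).map π ≠ [] := by
    have := i.2
    intro h
    have := congrArg List.length h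
    simp at this; omega
  conv_lhs => rw [← List.dropLast_append_getLast hne]
  congr 2
  rw [List.getLast_eq_getElem]
  simp only [List.getElem_map, List.getElem_finRange]
  congr 1
  apply Fin.ext
  simp [hi]

theorem GKSRel.equiv {k : ℕ} {γ δ : Type} (e : γ ≃ δ) (h : GKSRel k γ) : GKSRel k δ := by
  obtain ⟨a, B, hB⟩ := h
  refine ⟨fun l => a (l.map e.symm), fun x => (B (x ∘ e)).map e.toEmbedding,
    fun l hl hc x hx => ?_⟩
  have hback : ∀ m : List γ, (m.map e).map e.symm = m := by intro m; simp
  have hforw : ∀ m : List δ, (m.map e.symm).map e = m := by intro m; simp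
  have h0 := hB (l.map e.symm) (hl.map e.symm.injective)
    (fun g => by simpa using ⟨e g, hc _, by simp⟩) (x ∘ e) (by
      intro p j s hp hs
      have := hx (p.map e) (e j) (s.map e) (by
        rw [← hforw l, hp]; simp) (by simpa using hs)
      simpa using this)
  refine ⟨fun p j hp => ?_, by simpa using h0.2⟩
  have := h0.1 (p.map e.symm) (e.symm j) (by rw [hp]; simp)
  simpa using this

/-- parity of a string -/
def gksPar {β : Type} [Fintype β] (f : β → Bool) : Bool := decide (Odd (∑ j, (f j).toNat))

theorem gksPar_update {β : Type} [Fintype β] [DecidableEq β] (f : β → Bool) (j : β) (t : Bool) :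
    ∃ c, ∀ g : β → Bool, (∀ j', j' ≠ j → g j' = f j') → g j = c → gksPar g = t := by
  have h : ∀ g : β → Bool, (∀ j', j' ≠ j → g j' = f j') →
      ∑ j, (g j).toNat = (g j).toNat + ∑ j' ∈ Finset.univ.erase j, (f j').toNat := by
    intro g hg
    rw [← Finset.add_sum_erase _ _ (Finset.mem_univ j)]
    congr 1
    exact Finset.sum_congr rfl fun j' hj' => by rw [hg j' (Finset.ne_of_mem_erase hj')]
  generalize hN : ∑ j' ∈ Finset.univ.erase j, (f j').toNat = N at h
  refine ⟨xor t (decide (Odd N)), fun g hg hc => ?_⟩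
  unfold gksPar
  rw [h g hg, hc]
  by_cases hO : Odd N
  · have : Even (1 + N) := by rw [add_comm]; exact hO.add_one
    cases t <;> simp [hO, this]
  · have : Odd (1 + N) := by rw [add_comm]; exact (Nat.not_odd_iff_even.1 hO).add_one
    cases t <;> simp [hO, this]

theorem gks_dedup_append {α : Type} [DecidableEq α] (u v : List α) :
    (u ++ v).dedup = u.dedup.filter (fun i => decide (i ∉ v)) ++ v.dedup := by
  induction u with
  | nil => simp
  | cons c u ih =>
    by_cases h : c ∈ u
    · rw [List.cons_append, List.dedup_cons_of_mem (by simp [h]), List.dedup_cons_of_mem h, ih]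
    · rw [List.dedup_cons_of_notMem h, List.cons_append]
      by_cases h2 : c ∈ v
      · rw [List.dedup_cons_of_mem (by simp [h2]), ih]; simp [h2]
      · rw [List.dedup_cons_of_notMem (by simp [h, h2]), ih]; simp [h2]

set_option linter.unusedSectionVars false

section
variable {α β : Type} [Fintype α] [Fintype β] [DecidableEq α] [DecidableEq β]

/-- inner list of block `i` -/
def gksIn (i : α) (l : List (α × β)) : List β := (l.filter (fun q => q.1 = i)).map Prod.snd

/-- list of finished blocks -/
def gksOut (l : List (α × β)) : List α :=
  (l.map Prod.fst).dedup.filter (fun i => decide (∀ j, (i, j) ∈ l))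

/-- the string Alice writes along a list -/
def gksStr (a : List β → Bool) (m : List β) : β → Bool := fun j => a (m.take (m.idxOf j + 1))

/-- Alice's composed strategy -/
noncomputable def gksComp (a : List α → Bool) (a' : List β → Bool) (q : List (α × β)) : Bool :=
  match q.getLast? with
  | none => false
  | some (i, j) =>
    if ∀ j', (i, j') ∈ q then
      (gksPar_update (gksStr a' (gksIn i q)) j (a (gksOut q))).choose
    else a' (gksIn i q)

theorem gksIn_append (i : α) (p s : List (α × β)) :
    gksIn i (p ++ s) = gksIn i p ++ gksIn i s := by simp [gksIn]

theorem gksIn_cons (i : α) (j : β) (s : List (α × β)) :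
    gksIn i ((i, j) :: s) = j :: gksIn i s := by simp [gksIn]

theorem mem_gksIn (i : α) (j : β) (s : List (α × β)) : j ∈ gksIn i s ↔ (i, j) ∈ s := by
  simp [gksIn]

theorem gksIn_nodup (i : α) (l : List (α × β)) (hl : l.Nodup) : (gksIn i l).Nodup := by
  unfold gksIn
  refine List.Nodup.map_on ?_ (hl.filter _)
  rintro ⟨i1, j1⟩ h1 ⟨i2, j2⟩ h2 h
  simp at h1 h2 h
  simp [h1.2, h2.2, h]

theorem gksOut_split (q s : List (α × β)) (hl : (q ++ s).Nodup) (hc : ∀ g, g ∈ q ++ s) :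
    ((q ++ s).map Prod.fst).dedup = gksOut q ++ (s.map Prod.fst).dedup := by
  rw [List.map_append, gks_dedup_append]
  congr 1
  unfold gksOut
  apply List.filter_congr
  intro i _
  have hd := List.disjoint_of_nodup_append hl
  simp only [decide_eq_decide]
  constructor
  · intro h j
    rcases List.mem_append.1 (hc (i, j)) with h1 | h1
    · exact h1
    · exact absurd (List.mem_map_of_mem (f := Prod.fst) h1) h
  · intro h h1
    obtain ⟨⟨i', j⟩, h2, rfl⟩ := List.mem_map.1 h1
    exact hd (h j) h2

theorem gksOut_last (p : List (α × β)) (i : α) (j : β) (h : ∀ j', (i, j') ∈ p ++ [(i, j)]) :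
    ∃ P, gksOut (p ++ [(i, j)]) = P ++ [i] := by
  unfold gksOut
  rw [List.map_append, gks_dedup_append, List.filter_append]
  refine ⟨_, congrArg _ ?_⟩
  simp only [List.map_cons, List.map_nil, (List.nodup_singleton i).dedup]
  rw [List.filter_cons_of_pos (by simpa using h)]
  simp

theorem nodup_split_unique {γ : Type} {p p' s s' : List γ} {c : γ}
    (hl : (p ++ c :: s).Nodup) (h : p ++ c :: s = p' ++ c :: s') : p = p' ∧ s = s' := by
  classical
  have hl' := hl
  rw [h] at hl'
  have h1 : c ∉ p := fun hc => List.disjoint_of_nodup_append hl hc (by simp)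
  have h2 : c ∉ p' := fun hc => List.disjoint_of_nodup_append hl' hc (by simp)
  have h3 : p.length = p'.length := by
    have := congrArg (List.idxOf c) h
    simpa [List.idxOf_append, h1, h2] using this
  have := List.append_inj h h3
  simpa using this

theorem gks_inner_play (a : List α → Bool) (a' : List β → Bool) (l : List (α × β))
    (hl : l.Nodup) (x : α × β → Bool) (hx : GKSPlay (gksComp a a') l x) (i : α)
    (hc : ∀ g, g ∈ l) :
    GKSPlay a' (gksIn i l) (fun j => x (i, j)) := by
  intro P j S hP hS
  obtain ⟨p, s, rfl⟩ := List.append_of_mem (hc (i, j))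
  have hnd := gksIn_nodup i _ hl
  rw [gksIn_append, gksIn_cons] at hP hnd
  obtain ⟨rfl, rfl⟩ := nodup_split_unique hnd hP
  have hs : s ≠ [] := by rintro rfl; exact hS rfl
  change x (i, j) = _
  rw [hx p (i, j) s rfl hs]
  unfold gksComp
  simp only [List.getLast?_append, List.getLast?_singleton, Option.some_or]
  rw [if_neg]
  · rw [gksIn_append, gksIn_cons]; rfl
  · intro h
    obtain ⟨j', hj'⟩ := List.exists_mem_of_ne_nil _ hS
    rw [mem_gksIn] at hj'
    have hl2 : ((p ++ [(i, j)]) ++ s).Nodup := by simpa using hl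
    exact List.disjoint_of_nodup_append hl2 (h j') hj'

theorem gks_exists_last (l : List (α × β)) (i : α) (h : i ∈ l.map Prod.fst) :
    ∃ p j s, l = p ++ (i, j) :: s ∧ i ∉ s.map Prod.fst := by
  induction l with
  | nil => simp at h
  | cons c l ih =>
    by_cases h2 : i ∈ l.map Prod.fst
    · obtain ⟨p, j, s, rfl, hs⟩ := ih h2
      exact ⟨c :: p, j, s, rfl, hs⟩
    · obtain ⟨i', j⟩ := c
      have : i = i' := by
        rcases List.mem_cons.1 h with h | h
        · exact h
        · exact absurd h h2
      subst this
      exact ⟨[], j, l, rfl, h2⟩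

theorem gks_outer_play (a : List α → Bool) (a' : List β → Bool) (l : List (α × β))
    (hl : l.Nodup) (x : α × β → Bool) (hx : GKSPlay (gksComp a a') l x)
    (hc : ∀ g, g ∈ l) :
    GKSPlay a ((l.map Prod.fst).dedup) (fun i => gksPar fun j => x (i, j)) := by
  intro P i S hP hS
  have hi : i ∈ l.map Prod.fst := by
    rw [← List.mem_dedup, hP]; simp
  obtain ⟨p, j, s, rfl, his⟩ := gks_exists_last l i hi
  have heq : p ++ (i, j) :: s = (p ++ [(i, j)]) ++ s := by simp
  have hin := gks_inner_play a a' _ hl x hx i hc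
  have hinEq : gksIn i (p ++ (i, j) :: s) = gksIn i (p ++ [(i, j)]) := by
    rw [heq, gksIn_append (s := s)]
    have : gksIn i s = [] := by
      rw [List.eq_nil_iff_forall_not_mem]
      intro j' hj'
      rw [mem_gksIn] at hj'
      exact his (List.mem_map_of_mem (f := Prod.fst) hj')
    simp [this]
  have hfull : ∀ j', (i, j') ∈ p ++ [(i, j)] := by
    intro j'
    have h1 := hc (i, j')
    rw [heq] at h1
    rcases List.mem_append.1 h1 with h1 | h1
    · exact h1
    · exact absurd (List.mem_map_of_mem (f := Prod.fst) h1) his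
  obtain ⟨P', hP'⟩ := gksOut_last p i j hfull
  have hD := gksOut_split (p ++ [(i, j)]) s (heq ▸ hl) (heq ▸ hc)
  rw [← heq, hP', hP] at hD
  have hnd : (P ++ i :: S).Nodup := hP ▸ List.nodup_dedup _
  obtain ⟨rfl, rfl⟩ := nodup_split_unique hnd (by simpa using hD)
  have hs : s ≠ [] := by rintro rfl; exact hS rfl
  have hval := hx p (i, j) s rfl hs
  unfold gksComp at hval
  simp only [List.getLast?_append, List.getLast?_singleton, Option.some_or] at hval
  rw [if_pos hfull] at hval
  have hch := (gksPar_update (gksStr a' (gksIn i (p ++ [(i, j)]))) j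
    (a (gksOut (p ++ [(i, j)])))).choose_spec
  rw [← hP']
  refine hch (fun j => x (i, j)) ?_ hval
  intro j' hj'
  have hnd2 := gksIn_nodup i _ hl
  rw [hinEq] at hin hnd2
  obtain ⟨u, v, huv⟩ := List.append_of_mem ((mem_gksIn i j' _).2 (hfull j'))
  have hv : v ≠ [] := by
    rintro rfl
    rw [gksIn_append, gksIn_cons] at huv
    have := congrArg List.getLast? huv
    simp [gksIn] at this
    exact hj' this.symm
  refine (hin u j' v huv hv).trans ?_
  unfold gksStr
  rw [huv] at hnd2 ⊢
  have hju : j' ∉ u := fun h => List.disjoint_of_nodup_append hnd2 h (by simp)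
  rw [List.idxOf_append_of_notMem hju]
  rw [List.idxOf_cons_self, Nat.add_zero, gks_take]

theorem GKSRel.prod {k k' : ℕ} (h : GKSRel k α) (h' : GKSRel k' β) [Nonempty β] :
    GKSRel (k * k') (α × β) := by
  obtain ⟨a, B, hB⟩ := h
  obtain ⟨a', B', hB'⟩ := h'
  refine ⟨gksComp a a', fun x => (B fun i => gksPar fun j => x (i, j)).biUnion fun i =>
    (B' fun j => x (i, j)).image fun j => (i, j), fun l hl hc x hx => ?_⟩
  have h1 := hB _ (List.nodup_dedup (l.map Prod.fst)) (fun g => by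
    rw [List.mem_dedup]
    exact List.mem_map_of_mem (f := Prod.fst) (hc (g, Classical.arbitrary β))) _
    (gks_outer_play a a' l hl x hx hc)
  have h2 := fun i => hB' _ (gksIn_nodup i l hl) (fun g => by rw [mem_gksIn]; exact hc _) _
    (gks_inner_play a a' l hl x hx i hc)
  constructor
  · rintro p ⟨i, j⟩ rfl
    rw [Finset.mem_biUnion]
    refine ⟨i, h1.1 ((p.map Prod.fst).dedup.filter fun i' => decide (i' ∉ [i])) i ?_, Finset.mem_image.2 ⟨j, (h2 i).1 (gksIn i p) j ?_, rfl⟩⟩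
    · rw [List.map_append, gks_dedup_append]
      simp only [List.map_cons, List.map_nil, (List.nodup_singleton i).dedup]
    · rw [gksIn_append, gksIn_cons]; rfl
  · refine (Finset.card_biUnion_le_card_mul _ _ k' fun i _ =>
      Finset.card_image_le.trans (h2 i).2).trans ?_
    exact Nat.mul_le_mul_right _ h1.2
end

/-- If there exists a `(k, n)` strategy and a `(k', n')` strategy for the GKS
game, then there exists a `(k * k', n * n')` strategy for the GKS game. -/
theorem gks_strategy_composition (k n k' n' : ℕ)
    (hk : 0 < k) (hn : 0 < n) (hk' : 0 < k') (hn' : 0 < n')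
    (h : HasGKSStrategy k n) (h' : HasGKSStrategy k' n') :
    HasGKSStrategy (k * k') (n * n') := by
  haveI : Nonempty (Fin n') := ⟨⟨0, hn'⟩⟩
  exact has_of_gksRel (((gksRel_of_has h).prod (gksRel_of_has h')).equiv finProdFinEquiv)
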